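/- (Faber's incidence formula) Let q be a prime power and let K ⊆ 𝔽_q² be a union of q+1 lines L_s, one for each slope s ∈ PG(1,q). Then #K = q(q+1)/2 + Σ_{x ∈ K} C(μ_x − 1, 2), where μ_x is the number of the lines L_s passing through x and C(n,2) = n(n−1)/2. -/

import Mathlib

open Finset

/-- The line in `F × F` through `p` with (finite) slope `s`. -/
def lineF {F : Type*} [Field F] [Fintype F] [DecidableEq F] (s : F) (p : F × F) :
    Finset (F × F) :=
  Finset.univ.filter fun x => x.2 = p.2 + s * (x.1 - p.1)

/-- The vertical line in `F × F` with first coordinate `c`. -/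
def vertF {F : Type*} [Field F] [Fintype F] [DecidableEq F] (c : F) : Finset (F × F) :=
  Finset.univ.filter fun x => x.1 = c

/-- The line through `p` with slope `s ∈ PG(1,q) = F ∪ {∞}` (`none` = vertical). -/
def lineO {F : Type*} [Field F] [Fintype F] [DecidableEq F] (s : Option F) (p : F × F) :
    Finset (F × F) :=
  match s with
  | some a => lineF a p
  | none => vertF p.1

/-!
A point `x` on `m ≥ 1` lines satisfies Pascal's identity `1 + C(m, 2) = m + C(m - 1, 2)`. Summing
over the union `K`, the left side counts the points together with the incidences of points with
pairs of lines, and `∑ m` is the sum of the sizes of the lines. Any two of the `q + 1` lines meet in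
exactly one point, so `#K + C(q + 1, 2) = (q + 1) q + ∑ C(m - 1, 2)`, where `(q + 1) q` is
`2 C(q + 1, 2)`.
-/

theorem one_add_choose_two_eq_add_pred_choose_two {m : ℕ} (hm : 0 < m) :
    1 + m.choose 2 = m + (m - 1).choose 2 := by
  obtain ⟨n, rfl⟩ := Nat.exists_eq_add_of_le' hm
  rw [Nat.choose_succ_succ', Nat.choose_one_right, Nat.add_sub_cancel, ← add_assoc, add_comm 1]

section UnionOfFamily

variable {ι α : Type*}

theorem sum_choose_card_filter (s : Finset α) (t : Finset ι) (r : α → ι → Prop)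
    [∀ a i, Decidable (r a i)] (k : ℕ) :
    ∑ a ∈ s, (#{i ∈ t | r a i}).choose k = ∑ P ∈ t.powersetCard k, #{a ∈ s | ∀ i ∈ P, r a i} := by
  have powersetCard_filter (a : α) :
      {i ∈ t | r a i}.powersetCard k = {P ∈ t.powersetCard k | ∀ i ∈ P, r a i} := by
    ext P
    simp only [mem_powersetCard, mem_filter, subset_iff, forall_and]
    tauto
  simp_rw [← card_powersetCard, powersetCard_filter]
  exact sum_card_bipartiteAbove_eq_sum_card_bipartiteBelow fun a P => ∀ i ∈ P, r a i

variable [DecidableEq α]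

theorem sum_biUnion_card_filter_mem (s : Finset ι) (A : ι → Finset α) :
    ∑ x ∈ s.biUnion A, #{i ∈ s | x ∈ A i} = ∑ i ∈ s, #(A i) := by
  refine (sum_card_bipartiteAbove_eq_sum_card_bipartiteBelow fun x i => x ∈ A i).trans
    (sum_congr rfl fun i hi => congrArg card ?_)
  rw [bipartiteBelow, filter_mem_eq_inter, inter_eq_right]
  exact subset_biUnion_of_mem A hi

theorem sum_biUnion_choose_two_of_card_inter_eq {s : Finset ι} {A : ι → Finset α} {n : ℕ}
    (hA : (s : Set ι).Pairwise fun i j => #(A i ∩ A j) = n) :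
    ∑ x ∈ s.biUnion A, (#{i ∈ s | x ∈ A i}).choose 2 = (#s).choose 2 * n := by
  classical
  have card_common (P : Finset ι) (hP : P ∈ s.powersetCard 2) :
      #{x ∈ s.biUnion A | ∀ i ∈ P, x ∈ A i} = n := by
    obtain ⟨hPs, hP2⟩ := mem_powersetCard.1 hP
    obtain ⟨i, j, hij, rfl⟩ := card_eq_two.1 hP2
    have hi : i ∈ s := hPs (mem_insert_self i {j})
    have hj : j ∈ s := hPs (mem_insert_of_mem (mem_singleton_self j))
    rw [← hA hi hj hij]
    congr 1
    ext x
    simp only [mem_filter, mem_biUnion, mem_insert, mem_singleton, forall_eq_or_imp, forall_eq,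
      mem_inter, and_iff_right_iff_imp]
    exact fun hx => ⟨i, hi, hx.1⟩
  rw [sum_choose_card_filter, sum_const_nat card_common, card_powersetCard]

theorem card_biUnion_add_sum_choose_two (s : Finset ι) (A : ι → Finset α) :
    #(s.biUnion A) + ∑ x ∈ s.biUnion A, (#{i ∈ s | x ∈ A i}).choose 2
      = ∑ i ∈ s, #(A i) + ∑ x ∈ s.biUnion A, (#{i ∈ s | x ∈ A i} - 1).choose 2 := by
  rw [← sum_biUnion_card_filter_mem, card_eq_sum_ones, ← sum_add_distrib, ← sum_add_distrib]
  refine sum_congr rfl fun x hx => one_add_choose_two_eq_add_pred_choose_two ?_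
  obtain ⟨i, hi, hxi⟩ := mem_biUnion.1 hx
  exact card_pos.2 ⟨i, mem_filter.2 ⟨hi, hxi⟩⟩

theorem faber_incidence_formula_general {s : Finset ι} {A : ι → Finset α} {q : ℕ}
    (hs : #s = q + 1) (hcard : ∀ i ∈ s, #(A i) = q)
    (hinter : (s : Set ι).Pairwise fun i j => #(A i ∩ A j) = 1) :
    #(s.biUnion A)
      = q * (q + 1) / 2 + ∑ x ∈ s.biUnion A, (#{i ∈ s | x ∈ A i} - 1).choose 2 := by
  have hchoose : (#s).choose 2 = q * (q + 1) / 2 := by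
    rw [hs, Nat.choose_two_right, Nat.add_sub_cancel, mul_comm]
  have hsum : ∑ i ∈ s, #(A i) = 2 * (q * (q + 1) / 2) := by
    rw [sum_const_nat hcard, hs, Nat.two_mul_div_two_of_even (Nat.even_mul_succ_self q), mul_comm]
  have hcount := card_biUnion_add_sum_choose_two s A
  rw [sum_biUnion_choose_two_of_card_inter_eq hinter, mul_one, hchoose, hsum] at hcount
  lia

end UnionOfFamily

section Lines

variable {F : Type*} [Field F] [Fintype F] [DecidableEq F]

theorem card_vertF (c : F) : #(vertF c) = Fintype.card F := by
  have vertF_eq_product : vertF c = {c} ×ˢ univ := by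
    ext
    simp only [vertF, mem_filter_univ, mem_product, mem_singleton, mem_univ, and_true]
  rw [vertF_eq_product, card_product, card_singleton, one_mul, card_univ]

theorem card_lineF (a : F) (p : F × F) : #(lineF a p) = Fintype.card F := by
  have lineF_eq_graph : lineF a p = univ.image fun x => (x, p.2 + a * (x - p.1)) := by
    ext ⟨x, y⟩
    simp [lineF, eq_comm]
  rw [lineF_eq_graph, card_image_of_injective _ fun _ _ h => congrArg Prod.fst h, card_univ]

theorem card_lineO (s : Option F) (p : F × F) : #(lineO s p) = Fintype.card F :=
  match s with
  | none => card_vertF p.1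
  | some a => card_lineF a p

theorem card_vertF_inter_lineF (c a : F) (p : F × F) : #(vertF c ∩ lineF a p) = 1 := by
  refine card_eq_one.2 ⟨(c, p.2 + a * (c - p.1)), ?_⟩
  ext ⟨x, y⟩
  simp only [vertF, lineF, mem_inter, mem_filter_univ, mem_singleton, Prod.mk.injEq]
  exact and_congr_right fun hx => by rw [hx]

theorem card_lineF_inter_lineF {a b : F} (hab : a ≠ b) (p r : F × F) :
    #(lineF a p ∩ lineF b r) = 1 := by
  have hab' : a - b ≠ 0 := sub_ne_zero.2 hab
  let x₀ := ((r.2 - b * r.1) - (p.2 - a * p.1)) / (a - b)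
  have hx₀ (x : F) : p.2 + a * (x - p.1) = r.2 + b * (x - r.1) ↔ x = x₀ := by
    rw [eq_div_iff hab']
    constructor <;> intro h <;> linear_combination h
  refine card_eq_one.2 ⟨(x₀, p.2 + a * (x₀ - p.1)), ?_⟩
  ext ⟨x, y⟩
  simp only [lineF, mem_inter, mem_filter_univ, mem_singleton, Prod.mk.injEq]
  constructor
  · rintro ⟨hp, hr⟩
    obtain rfl := (hx₀ x).1 (hp.symm.trans hr)
    exact ⟨rfl, hp⟩
  · rintro ⟨rfl, rfl⟩
    exact ⟨rfl, (hx₀ x₀).2 rfl⟩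

theorem card_lineO_inter_lineO {s t : Option F} (hst : s ≠ t) (p r : F × F) :
    #(lineO s p ∩ lineO t r) = 1 :=
  match s, t with
  | none, none => absurd rfl hst
  | none, some b => card_vertF_inter_lineF p.1 b r
  | some a, none => (congrArg card (inter_comm _ _)).trans (card_vertF_inter_lineF r.1 a p)
  | some _, some _ => card_lineF_inter_lineF (fun h => hst (congrArg some h)) p r

end Lines

/-- Faber's incidence formula:
#K = q(q+1)/2 + Σ_{x ∈ K} C(μ_x − 1, 2). -/
theorem faber_incidence_formula {F : Type*} [Field F] [Fintype F] [DecidableEq F]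
    (L : Option F → Finset (F × F))
    (hL : ∀ s : Option F, ∃ p : F × F, L s = lineO s p) :
    ((Finset.univ : Finset (Option F)).biUnion L).card
      = Fintype.card F * (Fintype.card F + 1) / 2 +
        ∑ x ∈ (Finset.univ : Finset (Option F)).biUnion L,
          Nat.choose (((Finset.univ : Finset (Option F)).filter fun s => x ∈ L s).card - 1) 2 := by
  choose p hp using hL
  exact faber_incidence_formula_general (by rw [card_univ, Fintype.card_option])
    (fun s _ => by rw [hp, card_lineO])
    (fun s _ t _ hst => by simp only [hp, card_lineO_inter_lineO hst])
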